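/- Let n ≥ 2 and let A = (a_{rs}) ∈ ℂ^{n×n} satisfy Re(Σ_{r,s} a_{rs}ξ_rξ_s) > 0 for all ξ ∈ ℝⁿ∖{0}, and let A_sym := (A + Aᵀ)/2. Then there exists d ∈ ℂ with d² = det(A_sym) such that the function P(x') := (2/(ω_{n-1}d)) ⟨A_sym^{-1}(x',1),(x',1)⟩^{-n/2}, x' ∈ ℝ^{n-1}, is a Poisson kernel for L = Σ_{r,s} a_{rs}∂_r∂_s in ℝⁿ₊, meaning: (a) there is C > 0 with |P(x')| ≤ C(1+|x'|²)^{-n/2} for all x' ∈ ℝ^{n-1}; (b) ∫_{ℝ^{n-1}} P(x') dx' = 1; (c) the function K(x',t) := t^{1-n}P(x'/t) satisfies Σ_{r,s} a_{rs} ∂_r∂_s K = 0 pointwise in ℝⁿ₊ (with ∂_n = ∂_t). When A = I this P coincides with the classical harmonic Poisson kernel (2/ω_{n-1})(1+|x'|²)^{-n/2}. -/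

import Mathlib

open MeasureTheory Filter Metric Real
open scoped ENNReal NNReal Topology

noncomputable section

/-- The point `(x', t)` of `ℝⁿ`, where `x' ∈ ℝ^{n-1}` and `t ∈ ℝ` is the last coordinate. -/
def toUp {n : ℕ} (x' : EuclideanSpace ℝ (Fin (n - 1))) (t : ℝ) :
    EuclideanSpace ℝ (Fin n) :=
  (WithLp.equiv 2 (Fin n → ℝ)).symm
    (fun i => if h : (i : ℕ) < n - 1 then x' ⟨i, h⟩ else t)

/-- The first `n-1` coordinates of a point of `ℝⁿ`. -/
def xinit {n : ℕ} (x : EuclideanSpace ℝ (Fin n)) : EuclideanSpace ℝ (Fin (n - 1)) :=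
  (WithLp.equiv 2 (Fin (n - 1) → ℝ)).symm
    (fun i => x ⟨(i : ℕ), Nat.lt_of_lt_of_le i.isLt (Nat.sub_le n 1)⟩)

/-- The last coordinate of a point of `ℝⁿ`. -/
def xlast {n : ℕ} (x : EuclideanSpace ℝ (Fin n)) : ℝ :=
  if h : 0 < n then x ⟨n - 1, by omega⟩ else 0

/-- The upper half space `ℝⁿ₊`. -/
def upperHalfSpace (n : ℕ) : Set (EuclideanSpace ℝ (Fin n)) := {x | 0 < xlast x}

/-- The embedding `Fin (n-1) → Fin n`. -/
def finUp {n : ℕ} (i : Fin (n - 1)) : Fin n :=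
  ⟨(i : ℕ), Nat.lt_of_lt_of_le i.isLt (Nat.sub_le n 1)⟩

/-- The last index of `Fin n`. -/
def lastIdx (n : ℕ) (h : 0 < n) : Fin n := ⟨n - 1, by omega⟩

/-- Partial derivative along the `i`-th coordinate direction. -/
def pd {n : ℕ} {F : Type*} [NormedAddCommGroup F] [NormedSpace ℝ F]
    (i : Fin n) (u : EuclideanSpace ℝ (Fin n) → F) (x : EuclideanSpace ℝ (Fin n)) : F :=
  fderiv ℝ u x (EuclideanSpace.single i 1)

/-- Iterated mixed partial derivative along the string of coordinate directions `d`. -/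
def mpd {n : ℕ} {F : Type*} [NormedAddCommGroup F] [NormedSpace ℝ F]
    (k : ℕ) (d : Fin k → Fin n) (u : EuclideanSpace ℝ (Fin n) → F)
    (x : EuclideanSpace ℝ (Fin n)) : F :=
  iteratedFDeriv ℝ k u x (fun i => EuclideanSpace.single (d i) 1)

/-- The nontangential approach filter for the cone `Γ_κ(x')` (points written as `(y', t)`). -/
def ntFilter {n : ℕ} (κ : ℝ) (x' : EuclideanSpace ℝ (Fin (n - 1))) :
    Filter ((EuclideanSpace ℝ (Fin (n - 1))) × ℝ) :=
  (nhds (x', (0 : ℝ))) ⊓ Filter.principal {q | 0 < q.2 ∧ dist x' q.1 < κ * q.2}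

/-- The nontangential maximal function (aperture `κ`) of `u : ℝⁿ → F`,
as an `ℝ≥0∞`-valued function on `ℝ^{n-1}`. -/
def ntMax {n : ℕ} {F : Type*} [NormedAddCommGroup F] (κ : ℝ)
    (u : EuclideanSpace ℝ (Fin n) → F) (x' : EuclideanSpace ℝ (Fin (n - 1))) : ℝ≥0∞ :=
  ⨆ (y' : EuclideanSpace ℝ (Fin (n - 1))) (t : ℝ) (_ : 0 < t ∧ dist x' y' < κ * t),
    (‖u (toUp y' t)‖₊ : ℝ≥0∞)

/-- The `L^p` norm (`p ∈ (0,∞]`) of an `ℝ≥0∞`-valued function on `ℝ^m`. -/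
def lpNormE {m : ℕ} (g : EuclideanSpace ℝ (Fin m) → ℝ≥0∞) (p : ℝ≥0∞) : ℝ≥0∞ :=
  if p = ∞ then essSup g volume
  else (∫⁻ x', (g x') ^ p.toReal) ^ (1 / p.toReal)

/-- The Hardy–Littlewood maximal function. -/
def hlMax {m : ℕ} {F : Type*} [NormedAddCommGroup F]
    (f : EuclideanSpace ℝ (Fin m) → F) (x' : EuclideanSpace ℝ (Fin m)) : ℝ≥0∞ :=
  ⨆ (r : ℝ) (_ : 0 < r),
    (volume (ball x' r))⁻¹ * ∫⁻ y' in ball x' r, (‖f y'‖₊ : ℝ≥0∞)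

/-- The Legendre-Hadamard ellipticity condition for the coefficient tensor `A`,
where `A r s α β` stands for `a^{αβ}_{rs}`. -/
def LegendreHadamard {n M : ℕ} (A : Fin n → Fin n → Fin M → Fin M → ℂ) : Prop :=
  ∃ κ₀ : ℝ, 0 < κ₀ ∧ ∀ (ξ : Fin n → ℝ) (η : Fin M → ℂ),
    κ₀ * (∑ r, ξ r ^ 2) * (∑ a, ‖η a‖ ^ 2) ≤
      (∑ r, ∑ s, ∑ a, ∑ b, A r s a b * ξ r * ξ s * (starRingEnd ℂ) (η a) * η b).re

/-- `g` is the weak (distributional) mixed partial derivative of `f` of order `k`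
along the string of directions `d`. -/
def IsWeakDeriv {m : ℕ} {F : Type*} [NormedAddCommGroup F] [NormedSpace ℝ F]
    (k : ℕ) (d : Fin k → Fin m) (f g : EuclideanSpace ℝ (Fin m) → F) : Prop :=
  ∀ φ : EuclideanSpace ℝ (Fin m) → ℝ, ContDiff ℝ (⊤ : ℕ∞) φ → HasCompactSupport φ →
    ∫ x', (mpd k d φ x') • f x' = ((-1 : ℝ) ^ k) • ∫ x', φ x' • g x'

/-- The surface area `ω_{n-1}` of the unit sphere `S^{n-1}` in `ℝⁿ`. -/
def sphereArea (n : ℕ) : ℝ :=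
  (n : ℝ) * (volume (ball (0 : EuclideanSpace ℝ (Fin n)) (1 : ℝ))).toReal

/-- The parabolic dilation `F_t(x') = t^{1-n} F(x'/t)` of a matrix-valued kernel. -/
def matDil {n M : ℕ} (P : EuclideanSpace ℝ (Fin (n - 1)) → Matrix (Fin M) (Fin M) ℂ)
    (t : ℝ) (x' : EuclideanSpace ℝ (Fin (n - 1))) : Matrix (Fin M) (Fin M) ℂ :=
  (t ^ ((1 : ℤ) - (n : ℤ))) • P (t⁻¹ • x')

/-- The convolution `(P_t * f)(x')` of a dilated matrix kernel with a `ℂ^M`-valued function. -/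
def matConv {n M : ℕ} (P : EuclideanSpace ℝ (Fin (n - 1)) → Matrix (Fin M) (Fin M) ℂ)
    (f : EuclideanSpace ℝ (Fin (n - 1)) → EuclideanSpace ℂ (Fin M))
    (t : ℝ) (x' : EuclideanSpace ℝ (Fin (n - 1))) : EuclideanSpace ℂ (Fin M) :=
  (WithLp.equiv 2 (Fin M → ℂ)).symm
    (fun γ => ∫ y', ∑ α, matDil P t (x' - y') γ α * f y' α)


def QF {n : ℕ} (B : Matrix (Fin n) (Fin n) ℂ) (x : Fin n → ℝ) : ℂ :=
  ∑ r, ∑ s, B r s * (x r : ℂ) * (x s : ℂ)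

lemma QF_cont {n : ℕ} (B : Matrix (Fin n) (Fin n) ℂ) : Continuous (QF B) := by
  unfold QF; fun_prop

lemma QF_smul {n : ℕ} (B : Matrix (Fin n) (Fin n) ℂ) (t : ℝ) (x : Fin n → ℝ) :
    QF B (t • x) = (t : ℂ) ^ 2 * QF B x := by
  unfold QF
  simp only [Finset.mul_sum, Pi.smul_apply, smul_eq_mul, Complex.ofReal_mul]
  refine Finset.sum_congr rfl fun r _ => Finset.sum_congr rfl fun s _ => by ring

lemma QF_coercive {n : ℕ} (B : Matrix (Fin n) (Fin n) ℂ)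
    (h : ∀ x : Fin n → ℝ, x ≠ 0 → 0 < (QF B x).re) :
    ∃ c : ℝ, 0 < c ∧ ∀ x : Fin n → ℝ, c * ∑ i, x i ^ 2 ≤ (QF B x).re := by
  have hK : IsCompact {x : Fin n → ℝ | ∑ i, x i ^ 2 = 1} := by
    apply Metric.isCompact_of_isClosed_isBounded
    · exact isClosed_eq (by fun_prop) continuous_const
    · refine (Metric.isBounded_closedBall (x := (0 : Fin n → ℝ)) (r := 1)).subset ?_
      intro x hx
      rw [mem_closedBall_zero_iff, pi_norm_le_iff_of_nonneg zero_le_one]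
      intro i
      have h1 : x i ^ 2 ≤ ∑ i, x i ^ 2 :=
        Finset.single_le_sum (f := fun i => x i ^ 2) (fun j _ => sq_nonneg _) (Finset.mem_univ i)
      have hx' : ∑ i, x i ^ 2 = 1 := hx
      rw [Real.norm_eq_abs]
      exact abs_le_one_iff_mul_self_le_one.2 (by nlinarith)
  have key : ∃ c : ℝ, 0 < c ∧ ∀ x : Fin n → ℝ, ∑ i, x i ^ 2 = 1 → c ≤ (QF B x).re := by
    rcases Set.eq_empty_or_nonempty {x : Fin n → ℝ | ∑ i, x i ^ 2 = 1} with he | hne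
    · refine ⟨1, one_pos, fun x hx => ?_⟩
      have : x ∈ {x : Fin n → ℝ | ∑ i, x i ^ 2 = 1} := hx
      rw [he] at this; exact absurd this (Set.notMem_empty _)
    · obtain ⟨x0, hx0, hmin⟩ := hK.exists_isMinOn hne
        (Complex.continuous_re.comp (QF_cont B)).continuousOn
      refine ⟨(QF B x0).re, h x0 ?_, fun x hx => hmin hx⟩
      rintro rfl
      have : ∑ i, (0 : Fin n → ℝ) i ^ 2 = 1 := hx0
      simp at this
  obtain ⟨c, hc, hk⟩ := key
  refine ⟨c, hc, fun x => ?_⟩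
  by_cases hx : x = 0
  · subst hx; simp [QF]
  have hpos : 0 < ∑ i, x i ^ 2 := by
    obtain ⟨i, hi⟩ := Function.ne_iff.1 hx
    exact Finset.sum_pos' (fun j _ => sq_nonneg _) ⟨i, Finset.mem_univ _, by
      have : x i ≠ 0 := hi
      positivity⟩
  set N := ∑ i, x i ^ 2 with hN
  have h1 := hk ((√N)⁻¹ • x) (by
    simp only [Pi.smul_apply, smul_eq_mul, mul_pow, ← Finset.mul_sum, ← hN, inv_pow,
      Real.sq_sqrt hpos.le]
    field_simp)
  rw [QF_smul, ← Complex.ofReal_pow, Complex.re_ofReal_mul, inv_pow, Real.sq_sqrt hpos.le] at h1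
  rw [inv_mul_eq_div, le_div_iff₀ hpos] at h1
  exact h1

lemma QF_integrable {n : ℕ} (B : Matrix (Fin n) (Fin n) ℂ)
    (h : ∀ x : Fin n → ℝ, x ≠ 0 → 0 < (QF B x).re) :
    Integrable (fun x : Fin n → ℝ => Complex.exp (-QF B x)) := by
  obtain ⟨c, hc, hcb⟩ := QF_coercive B h
  have h1 : Integrable (fun x : Fin n → ℝ => ∏ i, Real.exp (-c * x i ^ 2)) :=
    Integrable.fintype_prod (f := fun _ (y : ℝ) => Real.exp (-c * y ^ 2))
      (fun i => integrable_exp_neg_mul_sq hc)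
  refine h1.mono' ?_ ?_
  · exact (Complex.continuous_exp.comp (QF_cont B).neg).aestronglyMeasurable
  · refine Eventually.of_forall fun x => ?_
    rw [Complex.norm_exp, ← Real.exp_sum, ← Finset.mul_sum]
    apply Real.exp_le_exp.2
    have := hcb x
    simp only [Complex.neg_re]
    linarith

def subM {m : ℕ} (B : Matrix (Fin (m+1)) (Fin (m+1)) ℂ) : Matrix (Fin m) (Fin m) ℂ :=
  Matrix.of fun i j => B i.castSucc j.castSucc

lemma QF_snoc {m : ℕ} (B : Matrix (Fin (m+1)) (Fin (m+1)) ℂ) (hB : B.transpose = B)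
    (y : Fin m → ℝ) (t : ℝ) :
    QF B (Fin.snoc (α := fun _ => ℝ) y t) = QF (subM B) y
      + 2 * (∑ i, B i.castSucc (Fin.last m) * (y i : ℂ)) * (t : ℂ)
      + B (Fin.last m) (Fin.last m) * (t : ℂ) ^ 2 := by
  have hs : ∀ i j, B i j = B j i := fun i j => by conv_lhs => rw [← hB, Matrix.transpose_apply]
  unfold QF subM
  simp only [Matrix.of_apply, Fin.sum_univ_castSucc, Fin.snoc_castSucc, Fin.snoc_last, Finset.sum_add_distrib]
  have : ∑ x : Fin m, B (Fin.last m) x.castSucc * (t : ℂ) * (y x : ℂ)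
     = ∑ x : Fin m, B x.castSucc (Fin.last m) * (y x : ℂ) * (t : ℂ) :=
    Finset.sum_congr rfl fun x _ => by rw [hs]; ring
  rw [this, ← Finset.sum_mul]
  ring

def schur {m : ℕ} (B : Matrix (Fin (m+1)) (Fin (m+1)) ℂ) : Matrix (Fin m) (Fin m) ℂ :=
  Matrix.of fun i j => B i.castSucc j.castSucc
    - B i.castSucc (Fin.last m) * (B (Fin.last m) (Fin.last m))⁻¹ * B (Fin.last m) j.castSucc

lemma QF_schur {m : ℕ} (B : Matrix (Fin (m+1)) (Fin (m+1)) ℂ) (hB : B.transpose = B)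
    (y : Fin m → ℝ) :
    QF (schur B) y = QF (subM B) y - (∑ i, B i.castSucc (Fin.last m) * (y i : ℂ)) ^ 2
      * (B (Fin.last m) (Fin.last m))⁻¹ := by
  have hs : ∀ i j, B i j = B j i := fun i j => by conv_lhs => rw [← hB, Matrix.transpose_apply]
  unfold QF subM schur
  rw [sq, Finset.sum_mul_sum, Finset.sum_mul, ← Finset.sum_sub_distrib]
  refine Finset.sum_congr rfl fun r _ => ?_
  rw [Finset.sum_mul, ← Finset.sum_sub_distrib]
  refine Finset.sum_congr rfl fun s _ => ?_
  rw [Matrix.of_apply, Matrix.of_apply, hs (Fin.last m) s.castSucc]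
  ring

lemma det_schur {m : ℕ} (B : Matrix (Fin (m+1)) (Fin (m+1)) ℂ)
    (hb : B (Fin.last m) (Fin.last m) ≠ 0) :
    B.det = B (Fin.last m) (Fin.last m) * (schur B).det := by
  have h1 : B.det = (B.submatrix (finSumFinEquiv (m := m) (n := 1))
      (finSumFinEquiv (m := m) (n := 1))).det := (Matrix.det_submatrix_equiv_self _ _).symm
  rw [h1]
  set D : Matrix (Fin 1) (Fin 1) ℂ := Matrix.of fun _ _ => B (Fin.last m) (Fin.last m) with hD
  have hdet : D.det = B (Fin.last m) (Fin.last m) := by simp [hD]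
  have hinv : D⁻¹ = Matrix.of fun _ _ => (B (Fin.last m) (Fin.last m))⁻¹ := by
    apply Matrix.inv_eq_right_inv
    ext i j
    rw [Subsingleton.elim i 0, Subsingleton.elim j 0]
    simp [Matrix.mul_apply, hD, hb]
  have : Invertible D := Matrix.invertibleOfIsUnitDet D (by rw [hdet]; exact hb.isUnit)
  have h2 : B.submatrix (finSumFinEquiv (m := m) (n := 1)) (finSumFinEquiv (m := m) (n := 1))
      = Matrix.fromBlocks (subM B) (Matrix.of fun i _ => B i.castSucc (Fin.last m))
        (Matrix.of fun _ j => B (Fin.last m) j.castSucc) D := by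
    ext i j
    rcases i with i | i <;> rcases j with j | j
    · rfl
    · rw [Subsingleton.elim j 0]; rfl
    · rw [Subsingleton.elim i 0]; rfl
    · rw [Subsingleton.elim i 0, Subsingleton.elim j 0]; rfl
  rw [h2, Matrix.det_fromBlocks₂₂, hdet, Matrix.invOf_eq_nonsing_inv, hinv]
  congr 2
  ext i j
  simp [Matrix.mul_apply, schur, subM]

lemma snoc_ne {m : ℕ} (y : Fin m → ℝ) (t : ℝ) (h : y ≠ 0 ∨ t ≠ 0) :
    (Fin.snoc (α := fun _ => ℝ) y t : Fin (m+1) → ℝ) ≠ 0 := by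
  intro h0
  rcases h with h | h
  · apply h; ext i
    have := congrFun h0 i.castSucc
    simpa using this
  · apply h
    have := congrFun h0 (Fin.last m)
    simpa using this

lemma corner_pos {m : ℕ} (B : Matrix (Fin (m+1)) (Fin (m+1)) ℂ) (hB : B.transpose = B)
    (h : ∀ x : Fin (m+1) → ℝ, x ≠ 0 → 0 < (QF B x).re) :
    0 < (B (Fin.last m) (Fin.last m)).re := by
  have := h _ (snoc_ne (0 : Fin m → ℝ) 1 (Or.inr one_ne_zero))
  rw [QF_snoc B hB] at this
  simpa [QF] using this

lemma schur_pos {m : ℕ} (B : Matrix (Fin (m+1)) (Fin (m+1)) ℂ) (hB : B.transpose = B)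
    (h : ∀ x : Fin (m+1) → ℝ, x ≠ 0 → 0 < (QF B x).re) (y : Fin m → ℝ) (hy : y ≠ 0) :
    0 < (QF (schur B) y).re := by
  have hb := corner_pos B hB h
  rw [QF_schur B hB]
  have key : ∀ t : ℝ, 0 < (QF B (Fin.snoc (α := fun _ => ℝ) y t)).re := fun t => h _ (snoc_ne y t (Or.inl hy))
  simp only [QF_snoc B hB] at key
  set b := B (Fin.last m) (Fin.last m)
  set q := ∑ i, B i.castSucc (Fin.last m) * (y i : ℂ)
  set p := QF (subM B) y
  have hb0 : b ≠ 0 := by intro h; simp [h] at hb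
  obtain ⟨z, hz⟩ : ∃ z : ℂ, q = - b * z := ⟨-q / b, by field_simp⟩
  have h1 := key z.re
  rw [hz] at h1 ⊢
  have : p - (-b * z) ^ 2 * b⁻¹ = p - b * z ^ 2 := by field_simp
  rw [this]
  simp only [sq, Complex.add_re, Complex.sub_re, Complex.mul_re, Complex.mul_im, Complex.neg_re,
    Complex.neg_im, Complex.ofReal_re, Complex.ofReal_im, Complex.re_ofNat, Complex.im_ofNat] at h1 ⊢
  nlinarith [mul_nonneg hb.le (sq_nonneg z.im)]

lemma integral_snoc {m : ℕ} (f : (Fin (m+1) → ℝ) → ℂ) :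
    ∫ x, f x = ∫ p : ℝ × (Fin m → ℝ), f (Fin.snoc (α := fun _ => ℝ) p.2 p.1) := by
  have := (volume_preserving_piFinSuccAbove (fun _ : Fin (m+1) => ℝ) (Fin.last m)).symm
  rw [← this.integral_comp (MeasurableEquiv.measurableEmbedding _)]
  refine integral_congr_ae (Eventually.of_forall fun p => ?_)
  change f (Fin.insertNth (Fin.last m) p.1 p.2) = _
  rw [Fin.insertNth_last']

lemma integrable_snoc {m : ℕ} (f : (Fin (m+1) → ℝ) → ℂ) (hf : Integrable f) :
    Integrable (fun p : ℝ × (Fin m → ℝ) => f (Fin.snoc (α := fun _ => ℝ) p.2 p.1)) := by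
  have := (volume_preserving_piFinSuccAbove (fun _ : Fin (m+1) => ℝ) (Fin.last m)).symm
  have h2 := (this.integrable_comp_emb (MeasurableEquiv.measurableEmbedding _)).2 hf
  refine h2.congr (Eventually.of_forall fun p => ?_)
  change f (Fin.insertNth (Fin.last m) p.1 p.2) = _
  rw [Fin.insertNth_last']

theorem gauss (n : ℕ) : ∀ B : Matrix (Fin n) (Fin n) ℂ, B.transpose = B →
    (∀ x : Fin n → ℝ, x ≠ 0 → 0 < (QF B x).re) →
    (∫ x : Fin n → ℝ, Complex.exp (-QF B x)) ^ 2 * B.det = (π : ℂ) ^ n := by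
  induction n with
  | zero =>
    intro B hB h
    have : volume.real (Set.univ : Set (Fin 0 → ℝ)) = 1 := by
      rw [measureReal_def, volume_pi, Measure.pi_of_empty]; simp
    simp [QF, this]
  | succ m ih =>
    intro B hB h
    have hb := corner_pos B hB h
    have hb0 : B (Fin.last m) (Fin.last m) ≠ 0 := by intro h; simp [h] at hb
    have hs : ∀ i j, B i j = B j i := fun i j => by conv_lhs => rw [← hB, Matrix.transpose_apply]
    have hS := ih (schur B) (by
      ext i j
      simp only [schur, Matrix.transpose_apply, Matrix.of_apply]
      rw [hs j.castSucc, hs j.castSucc, hs _ i.castSucc]; ring) (schur_pos B hB h)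
    have hI := integrable_snoc _ (QF_integrable B h)
    rw [integral_snoc, Measure.volume_eq_prod, integral_prod_symm _ hI, det_schur B hb0]
    have : ∀ y : Fin m → ℝ, ∫ t : ℝ, Complex.exp (-QF B (Fin.snoc (α := fun _ => ℝ) y t))
        = (π / B (Fin.last m) (Fin.last m)) ^ (1/2 : ℂ) * Complex.exp (-QF (schur B) y) := by
      intro y
      have := integral_cexp_quadratic (b := - B (Fin.last m) (Fin.last m)) (by simpa using hb)
        (-2 * (∑ i, B i.castSucc (Fin.last m) * (y i : ℂ))) (- QF (subM B) y)
      rw [neg_neg] at this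
      rw [QF_schur B hB]
      convert this using 3
      · rw [QF_snoc B hB]; ring_nf
      · field_simp; ring
    simp only [this]
    rw [integral_const_mul, mul_pow, ← Complex.cpow_nat_mul]
    norm_num
    rw [pow_succ (π : ℂ), ← hS]
    field_simp

lemma exists_inv {n : ℕ} (S : Matrix (Fin n) (Fin n) ℂ) (hS : S.transpose = S)
    (h : ∀ x : Fin n → ℝ, x ≠ 0 → 0 < (QF S x).re) : S.det ≠ 0 := by
  intro h0
  have := gauss n S hS h
  rw [h0, mul_zero] at this
  exact pow_ne_zero _ (by exact_mod_cast pi_ne_zero) this.symm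

lemma inv_pos_form {n : ℕ} (S : Matrix (Fin n) (Fin n) ℂ) (hS : S.transpose = S)
    (h : ∀ x : Fin n → ℝ, x ≠ 0 → 0 < (QF S x).re) (x : Fin n → ℝ) (hx : x ≠ 0) :
    0 < (QF S⁻¹ x).re := by
  have hdet := exists_inv S hS h
  have hs : ∀ i j, S i j = S j i := fun i j => by conv_lhs => rw [← hS, Matrix.transpose_apply]
  set y : Fin n → ℂ := S⁻¹.mulVec (fun i => (x i : ℂ)) with hy
  have hSy : S.mulVec y = fun i => (x i : ℂ) := by
    rw [hy, Matrix.mulVec_mulVec, Matrix.mul_nonsing_inv _ hdet.isUnit, Matrix.one_mulVec]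
  set u : Fin n → ℝ := fun i => (y i).re
  set v : Fin n → ℝ := fun i => (y i).im
  have e1 : QF S⁻¹ x = ∑ r, (x r : ℂ) * y r := by
    unfold QF
    refine Finset.sum_congr rfl fun r _ => ?_
    rw [hy, Matrix.mulVec, dotProduct, Finset.mul_sum]
    exact Finset.sum_congr rfl fun s _ => by ring
  have e2 : (QF S⁻¹ x).re = (QF S u).re + (QF S v).re := by
    have e3 : (∑ r, (x r : ℂ) * y r).re = (∑ r, (x r : ℂ) * (u r - Complex.I * v r)).re := by
      simp [u, v]
    have e4 : ∑ r, (x r : ℂ) * (u r - Complex.I * v r) = QF S u + QF S v := by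
      have : ∀ r, (x r : ℂ) = ∑ s, S r s * (u s + Complex.I * v s) := by
        intro r
        rw [← congrFun hSy r, Matrix.mulVec, dotProduct]
        refine Finset.sum_congr rfl fun s _ => ?_
        congr 1
        apply Complex.ext <;> simp [u, v]
      simp only [this, Finset.sum_mul]
      have e5 : ∑ r, ∑ s, S r s * (u r : ℂ) * (v s : ℂ) = ∑ r, ∑ s, S r s * (u s : ℂ) * (v r : ℂ) := by
        rw [Finset.sum_comm]
        exact Finset.sum_congr rfl fun r _ => Finset.sum_congr rfl fun s _ => by rw [hs]
      have : QF S u + QF S v = QF S u + QF S v + Complex.I * (∑ r, ∑ s, S r s * (u r : ℂ) * (v s : ℂ))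
         - Complex.I * ∑ r, ∑ s, S r s * (u s : ℂ) * (v r : ℂ) := by rw [e5]; ring
      rw [this]
      unfold QF
      simp only [Finset.mul_sum, ← Finset.sum_add_distrib, ← Finset.sum_sub_distrib]
      refine Finset.sum_congr rfl fun r _ => Finset.sum_congr rfl fun s _ => ?_
      linear_combination (- S r s * u r * 0 - S r s * v r * v s) * Complex.I_sq
    rw [e1, e3, e4, Complex.add_re]
  rw [e2]
  have nn : ∀ w : Fin n → ℝ, 0 ≤ (QF S w).re := fun w => by
    by_cases hw : w = 0
    · subst hw; simp [QF]
    · exact (h w hw).le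
  by_cases hu : u = 0
  · have hv : v ≠ 0 := by
      intro hv
      have hy0 : y = 0 := by
        ext i; apply Complex.ext
        · exact congrFun hu i
        · exact congrFun hv i
      apply hx; ext i
      have := congrFun hSy i
      rw [hy0, Matrix.mulVec_zero] at this
      have h3 : (x i : ℂ) = 0 := this.symm
      exact_mod_cast h3
    linarith [nn u, h v hv]
  · linarith [nn v, h u hu]

lemma real_mul_cpow {a : ℝ} (ha : 0 < a) {z : ℂ} (hz : z ≠ 0) (w : ℂ) :
    ((a : ℂ) * z) ^ w = (a : ℂ) ^ w * z ^ w := by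
  have ha' : (a : ℂ) ≠ 0 := by exact_mod_cast ha.ne'
  rw [Complex.cpow_def_of_ne_zero (mul_ne_zero ha' hz), Complex.cpow_def_of_ne_zero ha',
    Complex.cpow_def_of_ne_zero hz, Complex.log_ofReal_mul ha hz, ← Complex.exp_add,
    Complex.ofReal_log ha.le]
  ring_nf

lemma oneD_integrable (m : ℕ) (q : ℂ) (hq : 0 < q.re) :
    Integrable (fun t : ℝ => (t : ℂ) ^ m * Complex.exp (-((t : ℂ) ^ 2 * q))) := by
  have h1 := (integrable_rpow_mul_exp_neg_mul_sq hq (s := m) (by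
    have : (0 : ℝ) ≤ m := by positivity
    linarith)).norm
  refine h1.mono' (by fun_prop) (Eventually.of_forall fun t => le_of_eq ?_)
  rw [norm_mul, norm_mul, norm_pow, Complex.norm_real, Real.rpow_natCast, norm_pow, Complex.norm_exp,
    ← Complex.ofReal_pow, Complex.neg_re, Complex.re_ofReal_mul, Real.norm_eq_abs (Real.exp _), abs_of_pos (Real.exp_pos _)]
  ring_nf

lemma oneD_tendsto (m : ℕ) (q : ℂ) (hq : 0 < q.re) :
    Tendsto (fun t : ℝ => (t : ℂ) ^ m * Complex.exp (-((t : ℂ) ^ 2 * q))) atTop (𝓝 0) := by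
  rw [tendsto_zero_iff_norm_tendsto_zero]
  have h1 := (rpow_mul_exp_neg_mul_sq_isLittleO_exp_neg hq (m : ℝ)).isBigO.trans_tendsto
    (f'' := fun x : ℝ => x ^ (m : ℝ) * Real.exp (-q.re * x ^ 2)) (by
      refine Real.tendsto_exp_atBot.comp ?_
      exact (tendsto_id.const_mul_atTop_of_neg (by norm_num)))
  refine h1.congr' ?_
  filter_upwards [eventually_gt_atTop 0] with t ht
  rw [norm_mul, norm_pow, Complex.norm_real, Real.rpow_natCast, Complex.norm_exp,
    ← Complex.ofReal_pow, Complex.neg_re, Complex.re_ofReal_mul, Real.norm_eq_abs, abs_of_pos ht]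
  ring_nf

lemma oneD_rec (m : ℕ) (q : ℂ) (hq : 0 < q.re) :
    2 * q * ∫ t in Set.Ioi (0 : ℝ), (t : ℂ) ^ (m + 2) * Complex.exp (-((t : ℂ) ^ 2 * q))
     = (m + 1) * ∫ t in Set.Ioi (0 : ℝ), (t : ℂ) ^ m * Complex.exp (-((t : ℂ) ^ 2 * q)) := by
  have i1 := (oneD_integrable (m + 2) q hq).integrableOn (s := Set.Ioi 0)
  have i2 := (oneD_integrable m q hq).integrableOn (s := Set.Ioi 0)
  have hd : ∀ t : ℝ, HasDerivAt (fun t : ℝ => (t : ℂ) ^ (m+1) * Complex.exp (-((t : ℂ) ^ 2 * q)))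
      ((m + 1) * ((t : ℂ) ^ m * Complex.exp (-((t : ℂ) ^ 2 * q)))
        - 2 * q * ((t : ℂ) ^ (m + 2) * Complex.exp (-((t : ℂ) ^ 2 * q)))) t := by
    intro t
    have := ((hasDerivAt_pow (m+1) (t : ℂ)).fun_mul
      ((((hasDerivAt_pow 2 (t : ℂ)).mul_const q).fun_neg.cexp))).comp_ofReal
    convert this using 1
    push_cast
    ring
  have := integral_Ioi_of_hasDerivAt_of_tendsto (a := (0 : ℝ)) (hd 0).continuousAt.continuousWithinAt
    (fun t _ => hd t) ((i2.const_mul _).sub (i1.const_mul _)) (oneD_tendsto (m + 1) q hq)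
  rw [integral_sub (i2.const_mul _) (i1.const_mul _), integral_const_mul, integral_const_mul] at this
  simp only [Complex.ofReal_zero, ne_eq, Nat.add_eq_zero_iff, one_ne_zero, and_false, not_false_eq_true, zero_pow, zero_mul, sub_zero] at this
  linear_combination -this

lemma oneD (m : ℕ) (q : ℂ) (hq : 0 < q.re) :
    ∫ t in Set.Ioi (0 : ℝ), (t : ℂ) ^ m * Complex.exp (-((t : ℂ) ^ 2 * q))
      = (1 / 2) * Complex.Gamma (((m + 1 : ℕ) : ℂ) / 2) * q ^ (-((m + 1 : ℕ) : ℂ) / 2) := by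
  have hq0 : q ≠ 0 := by intro h; simp [h] at hq
  have harg : q.arg ≠ π := by
    intro h
    rw [Complex.arg_eq_pi_iff] at h
    linarith [h.1]
  induction m using Nat.twoStepInduction with
  | zero =>
    have := integral_gaussian_complex_Ioi hq
    simp only [pow_zero, one_mul]
    rw [show (fun t : ℝ => Complex.exp (-((t : ℂ) ^ 2 * q))) = fun t : ℝ => Complex.exp (-q * (t : ℂ) ^ 2) by
      ext t; ring_nf, this]
    rw [div_eq_mul_inv (π : ℂ), real_mul_cpow pi_pos (inv_ne_zero hq0), Complex.inv_cpow _ _ harg,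
      ← Complex.cpow_neg]
    norm_num
    rw [Complex.Gamma_one_half_eq]
    ring_nf
  | one =>
    have := integral_mul_cexp_neg_mul_sq hq
    simp only [pow_one]
    rw [show (fun t : ℝ => (t : ℂ) * Complex.exp (-((t : ℂ) ^ 2 * q))) = fun t : ℝ => (t : ℂ) * Complex.exp (-q * (t : ℂ) ^ 2) by
      ext t; ring_nf, this]
    norm_num
    rw [Complex.cpow_neg_one]
    ring
  | more m ih _ =>
    have h1 := oneD_rec m q hq
    rw [ih] at h1
    have h2 : (2 * q) ≠ 0 := by simp [hq0]
    apply mul_left_cancel₀ h2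
    rw [h1]
    have hm : ((m + 1 : ℕ) : ℂ) / 2 ≠ 0 := by
      simp only [ne_eq, div_eq_zero_iff, not_or]; constructor
      · exact_mod_cast Nat.succ_ne_zero m
      · norm_num
    rw [show ((m + 2 + 1 : ℕ) : ℂ) / 2 = ((m + 1 : ℕ) : ℂ) / 2 + 1 by push_cast; ring,
      Complex.Gamma_add_one _ hm,
      show -((m + 2 + 1 : ℕ) : ℂ) / 2 = -((m + 1 : ℕ) : ℂ) / 2 - 1 by push_cast; ring,
      Complex.cpow_sub _ _ hq0, Complex.cpow_one]
    push_cast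
    field_simp

lemma snoc_smul {m : ℕ} (t : ℝ) (y : Fin m → ℝ) :
    (Fin.snoc (α := fun _ => ℝ) (t • y) t : Fin (m+1) → ℝ) =
      t • (Fin.snoc (α := fun _ => ℝ) y 1 : Fin (m+1) → ℝ) := by
  ext i
  refine Fin.lastCases ?_ (fun i => ?_) i <;> simp

lemma snoc_neg {m : ℕ} (t : ℝ) (y : Fin m → ℝ) :
    (Fin.snoc (α := fun _ => ℝ) (-y) (-t) : Fin (m+1) → ℝ) =
      (-1 : ℝ) • (Fin.snoc (α := fun _ => ℝ) y t : Fin (m+1) → ℝ) := by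
  ext i
  refine Fin.lastCases ?_ (fun i => ?_) i <;> simp

lemma snoc_cont {m : ℕ} :
    Continuous (fun p : ℝ × (Fin m → ℝ) => (Fin.snoc (α := fun _ => ℝ) p.2 p.1 : Fin (m+1) → ℝ)) := by
  refine continuous_pi fun i => ?_
  refine Fin.lastCases ?_ (fun i => ?_) i
  · simp only [Fin.snoc_last]; fun_prop
  · simp only [Fin.snoc_castSucc]; fun_prop

lemma scale_int {E : Type*} [NormedAddCommGroup E] [NormedSpace ℝ E] {m : ℕ}
    (f : (Fin m → ℝ) → E) (t : ℝ) (ht : 0 < t) :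
    ∫ y, f y = t ^ m • ∫ y, f (t • y) := by
  rw [Measure.integral_comp_smul, Module.finrank_fin_fun, abs_of_pos (by positivity), smul_smul,
    mul_inv_cancel₀ (by positivity), one_smul]

theorem half_int {m : ℕ} (B : Matrix (Fin (m+1)) (Fin (m+1)) ℂ)
    (h : ∀ x : Fin (m+1) → ℝ, x ≠ 0 → 0 < (QF B x).re) :
    (∫ x : Fin (m+1) → ℝ, Complex.exp (-QF B x)) = Complex.Gamma (((m + 1 : ℕ) : ℂ) / 2) *
      ∫ y : Fin m → ℝ, (QF B (Fin.snoc (α := fun _ => ℝ) y 1)) ^ (-((m + 1 : ℕ) : ℂ) / 2) := by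
  have hI := integrable_snoc _ (QF_integrable B h)
  rw [integral_snoc, Measure.volume_eq_prod]
  rw [Measure.volume_eq_prod] at hI
  rw [integral_prod _ hI]
  set F : ℝ → ℂ := fun t => ∫ y : Fin m → ℝ, Complex.exp (-QF B (Fin.snoc (α := fun _ => ℝ) y t)) with hF
  have hFint : Integrable F := hI.integral_prod_left
  have hFeven : ∀ t, F (-t) = F t := by
    intro t
    simp only [hF]
    rw [← integral_neg_eq_self]
    refine integral_congr_ae (Eventually.of_forall fun y => ?_)
    simp only
    rw [snoc_neg, QF_smul]
    norm_num
  have hsplit : ∫ t, F t = 2 * ∫ t in Set.Ioi (0 : ℝ), F t := by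
    rw [← intervalIntegral.integral_Iic_add_Ioi (b := (0 : ℝ)) hFint.integrableOn hFint.integrableOn]
    have := integral_comp_neg_Iic (0 : ℝ) F
    simp only [hFeven, neg_zero] at this
    rw [this]; ring
  have hscale : ∀ t : ℝ, ∀ y : Fin m → ℝ, QF B (Fin.snoc (α := fun _ => ℝ) (t • y) t)
      = (t : ℂ) ^ 2 * QF B (Fin.snoc (α := fun _ => ℝ) y 1) := by
    intro t y; rw [snoc_smul, QF_smul]
  set g : ℝ → (Fin m → ℝ) → ℂ := fun t y =>
    (t : ℂ) ^ m * Complex.exp (-((t : ℂ) ^ 2 * QF B (Fin.snoc (α := fun _ => ℝ) y 1))) with hg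
  have hFg : ∀ t : ℝ, 0 < t → F t = ∫ y, g t y := by
    intro t ht
    simp only [hF, hg]
    rw [scale_int _ t ht, integral_const_mul]
    simp only [hscale, Complex.real_smul, Complex.ofReal_pow]
  have hcg : Continuous (Function.uncurry g) := by
    have c1 : Continuous (fun p : ℝ × (Fin m → ℝ) =>
        (Fin.snoc (α := fun _ => ℝ) p.2 1 : Fin (m+1) → ℝ)) :=
      snoc_cont.comp (f := fun p : ℝ × (Fin m → ℝ) => ((1 : ℝ), p.2)) (by fun_prop)
    have c2 := (QF_cont B).comp c1
    simp only [Function.comp_def] at c2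
    simp only [hg, Function.uncurry_def]
    fun_prop
  have hgint : Integrable (Function.uncurry g) ((volume.restrict (Set.Ioi (0 : ℝ))).prod volume) := by
    rw [integrable_prod_iff hcg.aestronglyMeasurable]
    constructor
    · rw [ae_restrict_iff' measurableSet_Ioi]
      filter_upwards [hI.prod_right_ae] with t ht htpos
      have htpos : 0 < t := htpos
      have := (ht.comp_smul htpos.ne').const_mul ((t : ℂ) ^ m)
      refine this.congr (Eventually.of_forall fun y => ?_)
      simp only [Function.uncurry_apply_pair, hg, hscale]
    · refine (hI.integral_norm_prod_left.integrableOn (s := Set.Ioi 0)).congr ?_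
      rw [EventuallyEq, ae_restrict_iff' measurableSet_Ioi]
      refine Eventually.of_forall fun t ht => ?_
      have ht : 0 < t := ht
      rw [scale_int _ t ht, smul_eq_mul, ← integral_const_mul]
      refine integral_congr_ae (Eventually.of_forall fun y => ?_)
      simp [hg, hscale, abs_of_pos ht]
  rw [hsplit, setIntegral_congr_fun measurableSet_Ioi hFg, integral_integral_swap hgint]
  have hin : ∀ y, ∫ t in Set.Ioi (0 : ℝ), g t y = _ := fun y =>
    oneD m _ (h _ (snoc_ne y 1 (Or.inr one_ne_zero)))
  simp only [hin]
  rw [integral_const_mul]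
  ring

lemma sphereArea_aux (n : ℕ) (hn : n ≠ 0) :
    (n : ℝ) * (volume (ball (0 : EuclideanSpace ℝ (Fin n)) (1 : ℝ))).toReal
      = 2 * √π ^ n / Real.Gamma ((n : ℝ) / 2) := by
  have : Nonempty (Fin n) := ⟨⟨0, Nat.pos_of_ne_zero hn⟩⟩
  have hn' : (0 : ℝ) < n := by exact_mod_cast Nat.pos_of_ne_zero hn
  rw [EuclideanSpace.volume_ball, Fintype.card_fin, Real.Gamma_add_one (by positivity)]
  have := Real.Gamma_pos_of_pos (show 0 < (n : ℝ) / 2 by positivity)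
  rw [ENNReal.ofReal_one, one_pow, one_mul, ENNReal.toReal_ofReal (by positivity)]
  field_simp

def coordC {n : ℕ} (r : Fin n) : EuclideanSpace ℝ (Fin n) →L[ℝ] ℂ :=
  Complex.ofRealCLM.comp (EuclideanSpace.proj r)

lemma coordC_apply {n : ℕ} (r : Fin n) (x : EuclideanSpace ℝ (Fin n)) :
    coordC r x = (x r : ℂ) := rfl

lemma coordC_single {n : ℕ} (r s : Fin n) :
    coordC r (EuclideanSpace.single s (1 : ℝ)) = if s = r then 1 else 0 := by
  rw [coordC_apply]
  by_cases h : s = r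
  · subst h; simp
  · simp [h, Ne.symm h]

def rowL {n : ℕ} (B : Matrix (Fin n) (Fin n) ℂ) (s : Fin n) : EuclideanSpace ℝ (Fin n) →L[ℝ] ℂ :=
  ∑ j, B s j • coordC j

lemma rowL_apply {n : ℕ} (B : Matrix (Fin n) (Fin n) ℂ) (s : Fin n) (x : EuclideanSpace ℝ (Fin n)) :
    rowL B s x = ∑ j, B s j * (x j : ℂ) := by
  simp [rowL, ContinuousLinearMap.sum_apply, coordC_apply]

lemma rowL_single {n : ℕ} (B : Matrix (Fin n) (Fin n) ℂ) (s r : Fin n) :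
    rowL B s (EuclideanSpace.single r (1 : ℝ)) = B s r := by
  simp [rowL, ContinuousLinearMap.sum_apply, coordC_single]

lemma QF_rowL {n : ℕ} (B : Matrix (Fin n) (Fin n) ℂ) (x : EuclideanSpace ℝ (Fin n)) :
    QF B x = ∑ r, coordC r x * rowL B r x := by
  unfold QF
  refine Finset.sum_congr rfl fun r _ => ?_
  rw [rowL_apply, coordC_apply, Finset.mul_sum]
  exact Finset.sum_congr rfl fun s _ => by ring

lemma QF_hasFDerivAt {n : ℕ} (B : Matrix (Fin n) (Fin n) ℂ) (hB : B.transpose = B)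
    (x : EuclideanSpace ℝ (Fin n)) :
    ∃ L : EuclideanSpace ℝ (Fin n) →L[ℝ] ℂ,
      HasFDerivAt (fun x : EuclideanSpace ℝ (Fin n) => QF B x) L x ∧
      ∀ s, L (EuclideanSpace.single s (1 : ℝ)) = 2 * rowL B s x := by
  have hs : ∀ i j, B i j = B j i := fun i j => by conv_lhs => rw [← hB, Matrix.transpose_apply]
  refine ⟨∑ r, (coordC r x • rowL B r + rowL B r x • coordC r), ?_, ?_⟩
  · simp only [QF_rowL]
    apply HasFDerivAt.fun_sum
    intro r _
    exact (coordC r).hasFDerivAt.mul (rowL B r).hasFDerivAt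
  · intro s
    simp only [ContinuousLinearMap.sum_apply, ContinuousLinearMap.add_apply,
      ContinuousLinearMap.smul_apply, rowL_single, coordC_single, smul_eq_mul, Finset.sum_add_distrib]
    simp only [mul_ite, mul_one, mul_zero, Finset.sum_ite_eq, Finset.mem_univ, if_true]
    have : ∑ r, coordC r x * B r s = rowL B s x := by
      rw [rowL_apply]
      exact Finset.sum_congr rfl fun r _ => by rw [hs r s, coordC_apply, mul_comm]
    rw [this]; ring

lemma QF_cpow_hasFDerivAt {n : ℕ} (B : Matrix (Fin n) (Fin n) ℂ) (hB : B.transpose = B)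
    (x : EuclideanSpace ℝ (Fin n)) (hx : 0 < (QF B x).re) (a : ℂ) :
    ∃ L : EuclideanSpace ℝ (Fin n) →L[ℝ] ℂ,
      HasFDerivAt (fun x : EuclideanSpace ℝ (Fin n) => (QF B x) ^ a) L x ∧
      ∀ s, L (EuclideanSpace.single s (1 : ℝ)) = a * (QF B x) ^ (a - 1) * (2 * rowL B s x) := by
  obtain ⟨L, hL, hL2⟩ := QF_hasFDerivAt B hB x
  have h1 : HasDerivAt (fun z : ℂ => z ^ a) (a * (QF B x) ^ (a - 1) * 1) (QF B x) :=
    (hasDerivAt_id (QF B x)).cpow_const (Or.inl hx)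
  have h2 : HasFDerivAt (fun x : EuclideanSpace ℝ (Fin n) => (QF B x) ^ a)
      ((a * (QF B x) ^ (a - 1) * 1) • L) x :=
    HasDerivAt.comp_hasFDerivAt (h₂ := fun z : ℂ => z ^ a)
      (f := fun x : EuclideanSpace ℝ (Fin n) => QF B x) x h1 hL
  refine ⟨_, h2, fun s => ?_⟩
  rw [ContinuousLinearMap.smul_apply, hL2, smul_eq_mul, mul_one]

lemma pd_first {n : ℕ} (B : Matrix (Fin n) (Fin n) ℂ) (hB : B.transpose = B)
    (x : EuclideanSpace ℝ (Fin n)) (hx : 0 < (QF B x).re) (a c : ℂ) (l s : Fin n) :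
    pd s (fun x : EuclideanSpace ℝ (Fin n) => c * coordC l x * (QF B x) ^ a) x
      = c * ((if s = l then 1 else 0) * (QF B x) ^ a
        + 2 * a * (coordC l x * ((QF B x) ^ (a - 1) * rowL B s x))) := by
  obtain ⟨L, hL, hL2⟩ := QF_cpow_hasFDerivAt B hB x hx a
  have h := ((coordC l).hasFDerivAt (x := x)).const_mul c |>.fun_mul hL
  unfold pd
  rw [HasFDerivAt.fderiv h]
  simp only [ContinuousLinearMap.add_apply, ContinuousLinearMap.smul_apply, hL2, coordC_single,
    smul_eq_mul]
  ring

lemma pd_second {n : ℕ} (B : Matrix (Fin n) (Fin n) ℂ) (hB : B.transpose = B)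
    (x : EuclideanSpace ℝ (Fin n)) (hx : 0 < (QF B x).re) (a c : ℂ) (l s r : Fin n) :
    pd r (fun x : EuclideanSpace ℝ (Fin n) => c * ((if s = l then 1 else 0) * (QF B x) ^ a
        + 2 * a * (coordC l x * ((QF B x) ^ (a - 1) * rowL B s x)))) x
      = c * (2 * a * (QF B x) ^ (a - 1) * ((if s = l then 1 else 0) * rowL B r x
        + (if r = l then 1 else 0) * rowL B s x + coordC l x * B s r)
        + 4 * a * (a - 1) * coordC l x * (QF B x) ^ (a - 1 - 1) * (rowL B r x * rowL B s x)) := by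
  obtain ⟨L, hL, hL2⟩ := QF_cpow_hasFDerivAt B hB x hx a
  obtain ⟨L', hL', hL2'⟩ := QF_cpow_hasFDerivAt B hB x hx (a - 1)
  have h := ((hL.const_mul (if s = l then (1 : ℂ) else 0)).fun_add
    ((((coordC l).hasFDerivAt (x := x)).fun_mul
      (hL'.fun_mul ((rowL B s).hasFDerivAt (x := x)))).const_mul (2 * a))).const_mul c
  unfold pd
  rw [HasFDerivAt.fderiv h]
  simp only [ContinuousLinearMap.add_apply, ContinuousLinearMap.smul_apply, hL2, hL2', coordC_single,
    rowL_single, smul_eq_mul]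
  ring

lemma pde {n : ℕ} (A S B : Matrix (Fin n) (Fin n) ℂ) (hB : B.transpose = B)
    (hS : S = ((1 : ℂ) / 2) • (A + A.transpose)) (hSB : S * B = 1)
    (hpos : ∀ x : Fin n → ℝ, x ≠ 0 → 0 < (QF B x).re) (l : Fin n) (c : ℂ)
    (f : EuclideanSpace ℝ (Fin n) → ℂ)
    (hf : ∀ x : EuclideanSpace ℝ (Fin n), 0 < x l →
      f x = c * coordC l x * (QF B x) ^ (-(n : ℂ) / 2))
    (x : EuclideanSpace ℝ (Fin n)) (hx : 0 < x l) :
    ∑ r, ∑ s, A r s * pd r (pd s f) x = 0 := by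
  have hsB : ∀ i j, B i j = B j i := fun i j => by conv_lhs => rw [← hB, Matrix.transpose_apply]
  have hST : ∀ i j, S i j = S j i := fun i j => by
    rw [hS]; simp [Matrix.add_apply, add_comm]
  have hpos' : ∀ y : EuclideanSpace ℝ (Fin n), 0 < y l → 0 < (QF B y).re := fun y hy =>
    hpos _ (fun h => by have := congrFun h l; simp at this; linarith)
  have hopen : IsOpen {y : EuclideanSpace ℝ (Fin n) | 0 < y l} :=
    isOpen_lt continuous_const (by fun_prop)
  set a : ℂ := -(n : ℂ) / 2 with ha
  have h1 : ∀ s, ∀ y : EuclideanSpace ℝ (Fin n), 0 < y l → pd s f y =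
      c * ((if s = l then 1 else 0) * (QF B y) ^ a
        + 2 * a * (coordC l y * ((QF B y) ^ (a - 1) * rowL B s y))) := by
    intro s y hy
    rw [← pd_first B hB y (hpos' y hy)]
    unfold pd
    rw [Filter.EventuallyEq.fderiv_eq]
    filter_upwards [hopen.mem_nhds hy] with z hz using hf z hz
  have h2 : ∀ r s, pd r (pd s f) x = c * (2 * a * (QF B x) ^ (a - 1) * ((if s = l then 1 else 0) * rowL B r x
        + (if r = l then 1 else 0) * rowL B s x + coordC l x * B s r)
        + 4 * a * (a - 1) * coordC l x * (QF B x) ^ (a - 1 - 1) * (rowL B r x * rowL B s x)) := by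
    intro r s
    rw [← pd_second B hB x (hpos' x hx)]
    conv_lhs => unfold pd
    conv_rhs => unfold pd
    rw [Filter.EventuallyEq.fderiv_eq]
    filter_upwards [hopen.mem_nhds hx] with z hz using h1 s z hz
  have hsym : ∀ r s, pd r (pd s f) x = pd s (pd r f) x := by
    intro r s; rw [h2, h2, hsB s r]; ring
  have h3 : ∑ r, ∑ s, A r s * pd r (pd s f) x = ∑ r, ∑ s, S r s * pd r (pd s f) x := by
    have e : ∑ r, ∑ s, A r s * pd r (pd s f) x = ∑ r, ∑ s, A s r * pd r (pd s f) x := by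
      rw [Finset.sum_comm]
      exact Finset.sum_congr rfl fun r _ => Finset.sum_congr rfl fun s _ => by rw [hsym]
    have e2 : ∑ r, ∑ s, S r s * pd r (pd s f) x
       = (1/2) * ∑ r, ∑ s, A r s * pd r (pd s f) x + (1/2) * ∑ r, ∑ s, A s r * pd r (pd s f) x := by
      rw [hS]
      simp only [Finset.mul_sum, ← Finset.sum_add_distrib]
      refine Finset.sum_congr rfl fun r _ => Finset.sum_congr rfl fun s _ => ?_
      simp only [Matrix.smul_apply, Matrix.add_apply, Matrix.transpose_apply, smul_eq_mul]
      ring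
    rw [e2, ← e]; ring
  rw [h3]
  have hSb : ∀ r, ∑ s, S r s * rowL B s x = coordC r x := by
    intro r
    have : ∑ s, S r s * rowL B s x = ((S * B).mulVec (fun i => (x i : ℂ))) r := by
      rw [← Matrix.mulVec_mulVec]
      simp only [Matrix.mulVec, dotProduct, rowL_apply]
    rw [this, hSB, Matrix.one_mulVec, coordC_apply]
  have k1 : ∑ r, ∑ s, S r s * ((if s = l then 1 else 0) * rowL B r x) = coordC l x := by
    simp only [ite_mul, one_mul, zero_mul, mul_ite, mul_zero, Finset.sum_ite_eq', Finset.mem_univ, if_true]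
    rw [← hSb l]
    exact Finset.sum_congr rfl fun r _ => by rw [hST]
  have k2 : ∑ r, ∑ s, S r s * ((if r = l then 1 else 0) * rowL B s x) = coordC l x := by
    rw [← k1, Finset.sum_comm]
    exact Finset.sum_congr rfl fun r _ => Finset.sum_congr rfl fun s _ => by rw [hST]
  have k3 : ∑ r, ∑ s, S r s * B s r = n := by
    have : ∑ r, ∑ s, S r s * B s r = (S * B).trace := by
      simp [Matrix.trace, Matrix.mul_apply]
    rw [this, hSB, Matrix.trace_one, Fintype.card_fin]
  have k4 : ∑ r, ∑ s, S r s * (rowL B r x * rowL B s x) = QF B x := by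
    rw [QF_rowL]
    refine Finset.sum_congr rfl fun r _ => ?_
    rw [← hSb r, Finset.sum_mul]
    exact Finset.sum_congr rfl fun s _ => by ring
  have hq0 : QF B x ≠ 0 := by
    intro h; have := hpos' x hx; simp [h] at this
  have k5 : (QF B x) ^ (a - 1 - 1) * QF B x = (QF B x) ^ (a - 1) := by
    rw [Complex.cpow_sub _ 1 hq0, Complex.cpow_one]; field_simp
  have tot : ∑ r, ∑ s, S r s * pd r (pd s f) x =
      c * (2 * a * (QF B x) ^ (a - 1)) * (∑ r, ∑ s, S r s * ((if s = l then 1 else 0) * rowL B r x))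
      + c * (2 * a * (QF B x) ^ (a - 1)) * (∑ r, ∑ s, S r s * ((if r = l then 1 else 0) * rowL B s x))
      + c * (2 * a * (QF B x) ^ (a - 1)) * coordC l x * (∑ r, ∑ s, S r s * B s r)
      + c * (4 * a * (a - 1) * coordC l x * (QF B x) ^ (a - 1 - 1)) *
        (∑ r, ∑ s, S r s * (rowL B r x * rowL B s x)) := by
    simp only [Finset.mul_sum, ← Finset.sum_add_distrib]
    refine Finset.sum_congr rfl fun r _ => Finset.sum_congr rfl fun s _ => ?_
    rw [h2]; ring
  rw [tot, k1, k2, k3, k4]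
  have hn : (n : ℂ) = -2 * a := by rw [ha]; ring
  rw [hn]
  linear_combination c * (4 * a * (a - 1) * coordC l x) * k5

lemma toUp_snoc {m : ℕ} (x' : EuclideanSpace ℝ (Fin m)) (t : ℝ) :
    (toUp (n := m + 1) x' t).ofLp = Fin.snoc (α := fun _ => ℝ) x'.ofLp t := by
  funext i
  refine Fin.lastCases ?_ (fun j => ?_) i
  · rw [Fin.snoc_last]; simp [toUp]
  · rw [Fin.snoc_castSucc]; simp [toUp]

lemma xlast_eq {m : ℕ} (x : EuclideanSpace ℝ (Fin (m + 1))) : xlast x = x (Fin.last m) := by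
  simp [xlast, Fin.last]

lemma toUp_xinit {m : ℕ} (x : EuclideanSpace ℝ (Fin (m + 1))) (hx : xlast x ≠ 0) :
    (toUp (n := m + 1) ((xlast x)⁻¹ • xinit x) 1).ofLp = (xlast x)⁻¹ • x.ofLp := by
  rw [show (toUp (n := m + 1) ((xlast x)⁻¹ • xinit x) 1).ofLp = _ from toUp_snoc (m := m) _ _]
  funext i
  refine Fin.lastCases ?_ (fun j => ?_) i
  · rw [Fin.snoc_last]; rw [Pi.smul_apply, ← xlast_eq, smul_eq_mul, inv_mul_cancel₀ hx]
  · rw [Fin.snoc_castSucc]; rfl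

lemma QF_sym {n : ℕ} (A : Matrix (Fin n) (Fin n) ℂ) (x : Fin n → ℝ) :
    QF (((1 : ℂ) / 2) • (A + A.transpose)) x = QF A x := by
  have e : QF A x = ∑ r, ∑ s, A s r * (x r : ℂ) * (x s : ℂ) := by
    unfold QF
    rw [Finset.sum_comm]
    exact Finset.sum_congr rfl fun r _ => Finset.sum_congr rfl fun s _ => by ring
  have e2 : QF (((1 : ℂ) / 2) • (A + A.transpose)) x
       = (1/2) * QF A x + (1/2) * ∑ r, ∑ s, A s r * (x r : ℂ) * (x s : ℂ) := by
    unfold QF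
    simp only [Finset.mul_sum, ← Finset.sum_add_distrib]
    refine Finset.sum_congr rfl fun r _ => Finset.sum_congr rfl fun s _ => ?_
    simp only [Matrix.smul_apply, Matrix.add_apply, Matrix.transpose_apply, smul_eq_mul]
    ring
  rw [e2, ← e]; ring

lemma sum_snoc_sq {m : ℕ} (x' : EuclideanSpace ℝ (Fin m)) :
    ∑ i, (Fin.snoc (α := fun _ => ℝ) x'.ofLp 1 : Fin (m + 1) → ℝ) i ^ 2 = 1 + ‖x'‖ ^ 2 := by
  rw [Fin.sum_univ_castSucc, EuclideanSpace.real_norm_sq_eq]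
  simp only [Fin.snoc_castSucc, Fin.snoc_last]
  ring

lemma sphereArea_eq (n : ℕ) (hn : n ≠ 0) :
    sphereArea n = 2 * √π ^ n / Real.Gamma (n / 2) := sphereArea_aux n hn

lemma kernel_scale {m : ℕ} (B : Matrix (Fin (m + 1)) (Fin (m + 1)) ℂ) (c : ℂ)
    (hpos : ∀ x : Fin (m + 1) → ℝ, x ≠ 0 → 0 < (QF B x).re)
    (x : EuclideanSpace ℝ (Fin (m + 1))) (hx : 0 < x (Fin.last m)) :
    ((xlast x : ℂ) ^ ((1 : ℤ) - ((m + 1 : ℕ) : ℤ))) *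
      (c * (QF B (toUp (n := m + 1) ((xlast x)⁻¹ • xinit x) 1).ofLp) ^ (-((m + 1 : ℕ) : ℂ) / 2))
      = c * coordC (Fin.last m) x * (QF B x) ^ (-((m + 1 : ℕ) : ℂ) / 2) := by
  have hx' : 0 < xlast x := by rw [xlast_eq]; exact hx
  rw [toUp_xinit x hx'.ne', QF_smul, coordC_apply, ← xlast_eq]
  have hx0 : x.ofLp ≠ 0 := fun h => by have := congrFun h (Fin.last m); simp at this; linarith
  have hq0 : QF B x ≠ 0 := fun h => by have := hpos _ hx0; simp [h] at this
  set t := xlast x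
  have ht : (t : ℂ) ≠ 0 := by exact_mod_cast hx'.ne'
  rw [← Complex.ofReal_pow, real_mul_cpow (by positivity) hq0]
  have : (((t⁻¹ ^ 2 : ℝ)) : ℂ) ^ (-((m + 1 : ℕ) : ℂ) / 2) = (t : ℂ) ^ (m + 1) := by
    rw [show (-((m + 1 : ℕ) : ℂ) / 2) = ((-((m + 1 : ℕ) : ℝ) / 2 : ℝ) : ℂ) by push_cast; ring]
    rw [← Complex.ofReal_cpow (by positivity), ← Complex.ofReal_pow]
    congr 1
    rw [← Real.rpow_natCast, ← Real.rpow_mul (by positivity), Real.inv_rpow hx'.le,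
      ← Real.rpow_neg hx'.le, ← Real.rpow_natCast]
    congr 1
    push_cast; ring
  rw [this]
  have h2 : (t : ℂ) ^ ((1 : ℤ) - ((m + 1 : ℕ) : ℤ)) * (t : ℂ) ^ (m + 1) = t := by
    rw [← zpow_natCast, ← zpow_add₀ ht]; simp
  linear_combination (c * QF B x ^ (-((m + 1 : ℕ) : ℂ) / 2)) * h2

lemma kernel_bound {m : ℕ} (B : Matrix (Fin (m + 1)) (Fin (m + 1)) ℂ)
    (hpos : ∀ x : Fin (m + 1) → ℝ, x ≠ 0 → 0 < (QF B x).re) :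
    ∃ C : ℝ, 0 < C ∧ ∀ x' : EuclideanSpace ℝ (Fin m),
      ‖(QF B (toUp (n := m + 1) x' 1).ofLp) ^ (-((m + 1 : ℕ) : ℂ) / 2)‖
        ≤ C * (1 + ‖x'‖ ^ 2) ^ (-((m + 1 : ℕ) : ℝ) / 2) := by
  obtain ⟨c, hc, hcoer⟩ := QF_coercive B hpos
  refine ⟨c ^ (-((m + 1 : ℕ) : ℝ) / 2), by positivity, fun x' => ?_⟩
  have h := hcoer (toUp (n := m + 1) x' 1).ofLp
  rw [show (toUp (n := m + 1) x' 1).ofLp = _ from toUp_snoc (m := m) _ _] at h ⊢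
  rw [sum_snoc_sq] at h
  set q := QF B (Fin.snoc (α := fun _ => ℝ) x'.ofLp 1)
  have h1 : 0 < c * (1 + ‖x'‖ ^ 2) := by positivity
  have h2 : c * (1 + ‖x'‖ ^ 2) ≤ ‖q‖ := h.trans (Complex.re_le_norm q)
  have hq0 : q ≠ 0 := fun h0 => by rw [h0, norm_zero] at h2; linarith
  rw [show (-((m + 1 : ℕ) : ℂ) / 2) = ((-((m + 1 : ℕ) : ℝ) / 2 : ℝ) : ℂ) by push_cast; ring]
  rw [Complex.norm_cpow_real, ← Real.mul_rpow hc.le (by positivity)]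
  apply Real.rpow_le_rpow_of_nonpos h1 h2
  have : (0 : ℝ) ≤ ((m + 1 : ℕ) : ℝ) := by positivity
  linarith

lemma int_toLp {m : ℕ} (B : Matrix (Fin (m + 1)) (Fin (m + 1)) ℂ) (w : ℂ) :
    ∫ x' : EuclideanSpace ℝ (Fin m), (QF B (toUp (n := m + 1) x' 1).ofLp) ^ w
     = ∫ y : Fin m → ℝ, (QF B (Fin.snoc (α := fun _ => ℝ) y 1)) ^ w := by
  rw [← (PiLp.volume_preserving_toLp (Fin m)).integral_comp
    (MeasurableEquiv.toLp 2 (Fin m → ℝ)).measurableEmbedding]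
  refine integral_congr_ae (Filter.Eventually.of_forall fun y => ?_)
  simp only
  rw [show (toUp (n := m + 1) (WithLp.toLp 2 y) 1).ofLp = _ from toUp_snoc (m := m) _ _]

lemma I_sq {m : ℕ} (S : Matrix (Fin (m + 1)) (Fin (m + 1)) ℂ) (hST : S.transpose = S)
    (h : ∀ x : Fin (m + 1) → ℝ, x ≠ 0 → 0 < (QF S x).re) :
    (2 * (∫ x' : EuclideanSpace ℝ (Fin m),
      (QF S⁻¹ (toUp (n := m + 1) x' 1).ofLp) ^ (-((m + 1 : ℕ) : ℂ) / 2)) / (sphereArea (m + 1) : ℂ)) ^ 2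
      = S.det := by
  have hdet := exists_inv S hST h
  have hBpos := inv_pos_form S hST h
  have hBT : (S⁻¹).transpose = S⁻¹ := by rw [Matrix.transpose_nonsing_inv, hST]
  have hg := gauss (m + 1) S⁻¹ hBT hBpos
  rw [half_int S⁻¹ hBpos, ← int_toLp] at hg
  set I := ∫ x' : EuclideanSpace ℝ (Fin m),
      (QF S⁻¹ (toUp (n := m + 1) x' 1).ofLp) ^ (-((m + 1 : ℕ) : ℂ) / 2)
  rw [Matrix.det_nonsing_inv, Ring.inverse_eq_inv'] at hg
  have hG : Complex.Gamma (((m + 1 : ℕ) : ℂ) / 2) = ((Real.Gamma (((m + 1 : ℕ) : ℝ) / 2) : ℝ) : ℂ) := by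
    rw [← Complex.Gamma_ofReal]; push_cast; rfl
  rw [hG] at hg
  rw [sphereArea_eq _ (Nat.succ_ne_zero m)]
  have hG0 : 0 < Real.Gamma (((m + 1 : ℕ) : ℝ) / 2) := Real.Gamma_pos_of_pos (by positivity)
  set G := Real.Gamma (((m + 1 : ℕ) : ℝ) / 2)
  have hG0' : (G : ℂ) ≠ 0 := by exact_mod_cast hG0.ne'
  have hp : ((√π : ℝ) : ℂ) ^ 2 = (π : ℂ) := by
    rw [← Complex.ofReal_pow, Real.sq_sqrt Real.pi_pos.le]
  have hp0 : ((√π : ℝ) : ℂ) ≠ 0 := by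
    have : √π ≠ 0 := by positivity
    exact_mod_cast this
  rw [← hp, ← pow_mul, mul_comm 2, pow_mul] at hg
  push_cast
  set W := ((√π : ℝ) : ℂ) ^ (m + 1)
  have hW0 : W ≠ 0 := pow_ne_zero _ hp0
  field_simp at hg ⊢
  linear_combination hg

lemma QF_one {m : ℕ} (x' : EuclideanSpace ℝ (Fin m)) :
    QF (1 : Matrix (Fin (m + 1)) (Fin (m + 1)) ℂ) (toUp (n := m + 1) x' 1).ofLp
      = ((1 + ‖x'‖ ^ 2 : ℝ) : ℂ) := by
  rw [show (toUp (n := m + 1) x' 1).ofLp = _ from toUp_snoc (m := m) _ _, ← sum_snoc_sq]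
  unfold QF
  simp only [Matrix.one_apply, ite_mul, one_mul, zero_mul, Finset.sum_ite_eq, Finset.mem_univ, if_true]
  push_cast
  exact Finset.sum_congr rfl fun i _ => by ring
/-- For a scalar elliptic operator `L = Σ a_{rs}∂_r∂_s` in `ℝⁿ`, `n ≥ 2`,
and a suitable square root `d` of `det A_sym`, the function
`P(x') = (2/(ω_{n-1} d)) ⟨A_sym⁻¹(x',1),(x',1)⟩^{-n/2}` is a Poisson kernel for `L` in
`ℝⁿ₊`: it has the right decay, unit integral, and its parabolic dilation
`K(x',t) = t^{1-n}P(x'/t)` is an `L`-null solution in the upper half space; moreover,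
for `A = 1` it coincides with the classical harmonic Poisson kernel. -/
theorem statement8
    (n : ℕ) (hn : 2 ≤ n)
    (A : Matrix (Fin n) (Fin n) ℂ)
    (hell : ∀ ξ : EuclideanSpace ℝ (Fin n), ξ ≠ 0 →
      0 < (∑ r, ∑ s, A r s * (ξ r : ℂ) * (ξ s : ℂ)).re)
    (Asym : Matrix (Fin n) (Fin n) ℂ) (hAsym : Asym = ((1 : ℂ) / 2) • (A + A.transpose)) :
    ∃ d : ℂ, d ^ 2 = Asym.det ∧
      (let P : EuclideanSpace ℝ (Fin (n - 1)) → ℂ := fun x' =>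
        (2 / ((sphereArea n : ℂ) * d)) *
          (∑ r, ∑ s, Asym⁻¹ r s * ((toUp x' 1 r : ℝ) : ℂ) * ((toUp x' 1 s : ℝ) : ℂ))
            ^ (-(n : ℂ) / 2)
      (∃ C : ℝ, 0 < C ∧ ∀ x' : EuclideanSpace ℝ (Fin (n - 1)),
          ‖P x'‖ ≤ C * (1 + ‖x'‖ ^ 2) ^ (-(n : ℝ) / 2)) ∧
      (∫ x' : EuclideanSpace ℝ (Fin (n - 1)), P x') = 1 ∧
      (∀ x' : EuclideanSpace ℝ (Fin (n - 1)), ∀ t : ℝ, 0 < t →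
        (∑ r, ∑ s, A r s *
            pd r (pd s (fun x : EuclideanSpace ℝ (Fin n) =>
              ((xlast x : ℂ) ^ ((1 : ℤ) - (n : ℤ))) * P ((xlast x)⁻¹ • xinit x)))
              (toUp x' t)) = 0) ∧
      (A = 1 → ∀ x' : EuclideanSpace ℝ (Fin (n - 1)),
        P x' = ((2 / sphereArea n * (1 + ‖x'‖ ^ 2) ^ (-(n : ℝ) / 2) : ℝ) : ℂ))) := by
  obtain ⟨m, rfl⟩ : ∃ m, n = m + 1 := ⟨n - 1, by omega⟩
  have hST : Asym.transpose = Asym := by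
    rw [hAsym, Matrix.transpose_smul, Matrix.transpose_add, Matrix.transpose_transpose, add_comm A.transpose]
  have hSpos : ∀ x : Fin (m + 1) → ℝ, x ≠ 0 → 0 < (QF Asym x).re := by
    intro x hx
    rw [hAsym, QF_sym]
    exact hell (WithLp.toLp 2 x) (fun h => hx (by simpa using congrArg WithLp.ofLp h))
  have hdet := exists_inv Asym hST hSpos
  have hBpos := inv_pos_form Asym hST hSpos
  have hBT : (Asym⁻¹).transpose = Asym⁻¹ := by rw [Matrix.transpose_nonsing_inv, hST]
  have hSB : Asym * Asym⁻¹ = 1 := Matrix.mul_nonsing_inv _ (isUnit_iff_ne_zero.mpr hdet)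
  have hd := I_sq Asym hST hSpos
  have hω : 0 < sphereArea (m + 1) := by
    rw [sphereArea_eq _ (Nat.succ_ne_zero m)]
    have := Real.Gamma_pos_of_pos (s := ((m + 1 : ℕ) : ℝ) / 2) (by positivity)
    positivity
  have hω' : (sphereArea (m + 1) : ℂ) ≠ 0 := by exact_mod_cast hω.ne'
  refine ⟨_, hd, ?_⟩
  set I := ∫ x' : EuclideanSpace ℝ (Fin m),
      (QF Asym⁻¹ (toUp (n := m + 1) x' 1).ofLp) ^ (-((m + 1 : ℕ) : ℂ) / 2) with hI
  have hd0 : 2 * I / (sphereArea (m + 1) : ℂ) ≠ 0 := by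
    intro h; rw [h] at hd; exact hdet (by rw [← hd]; ring)
  have hI0 : I ≠ 0 := by
    intro h; apply hd0; rw [h]; simp
  set d := 2 * I / (sphereArea (m + 1) : ℂ) with hdd
  set c := 2 / ((sphereArea (m + 1) : ℂ) * d) with hc
  have hc0 : c ≠ 0 := div_ne_zero two_ne_zero (mul_ne_zero hω' hd0)
  intro P
  have hP : ∀ x', P x' = c * (QF Asym⁻¹ (toUp (n := m + 1) x' 1).ofLp) ^ (-((m + 1 : ℕ) : ℂ) / 2) :=
    fun x' => rfl
  refine ⟨?_, ?_, ?_, ?_⟩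
  · obtain ⟨C, hC, hb⟩ := kernel_bound Asym⁻¹ hBpos
    refine ⟨‖c‖ * C, mul_pos (norm_pos_iff.mpr hc0) hC, fun x' => ?_⟩
    rw [hP, norm_mul, mul_assoc]
    exact mul_le_mul_of_nonneg_left (hb x') (norm_nonneg _)
  · have : (∫ x' : EuclideanSpace ℝ (Fin (m + 1 - 1)), P x') = c * I := by
      rw [hI]
      exact integral_const_mul c _
    rw [this, hc, hdd]
    field_simp
  · intro x' t ht
    apply pde A Asym Asym⁻¹ hBT hAsym hSB hBpos (Fin.last m) c
    · intro x hx
      exact kernel_scale Asym⁻¹ c hBpos x hx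
    · have := congrFun (toUp_snoc (m := m) x' t) (Fin.last m)
      rw [Fin.snoc_last] at this
      rw [this]; exact ht
  · intro hA x'
    have hS1 : Asym = 1 := by
      rw [hAsym, hA, Matrix.transpose_one, ← two_smul ℂ, smul_smul]; norm_num
    have hB1 : Asym⁻¹ = 1 := by rw [hS1, inv_one]
    have key : ∀ y' : EuclideanSpace ℝ (Fin m),
        (QF Asym⁻¹ (toUp (n := m + 1) y' 1).ofLp) ^ (-((m + 1 : ℕ) : ℂ) / 2)
        = (((1 + ‖y'‖ ^ 2) ^ (-((m + 1 : ℕ) : ℝ) / 2) : ℝ) : ℂ) := by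
      intro y'
      rw [hB1, QF_one, Complex.ofReal_cpow (by positivity)]
      congr 1
      push_cast; ring
    have hIr : I = ((∫ y' : EuclideanSpace ℝ (Fin m),
        ((1 + ‖y'‖ ^ 2) ^ (-((m + 1 : ℕ) : ℝ) / 2) : ℝ) : ℝ) : ℂ) := by
      rw [hI, ← integral_complex_ofReal]
      exact integral_congr_ae (Filter.Eventually.of_forall key)
    have hJ0 : 0 ≤ ∫ y' : EuclideanSpace ℝ (Fin m),
        ((1 + ‖y'‖ ^ 2) ^ (-((m + 1 : ℕ) : ℝ) / 2) : ℝ) :=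
      integral_nonneg fun y' => by positivity
    set J := ∫ y' : EuclideanSpace ℝ (Fin m),
        ((1 + ‖y'‖ ^ 2) ^ (-((m + 1 : ℕ) : ℝ) / 2) : ℝ)
    have hdr : d = ((2 * J / sphereArea (m + 1) : ℝ) : ℂ) := by
      rw [hdd, hIr]; push_cast; rfl
    have hd1 : d = 1 := by
      rw [hS1, Matrix.det_one, hdr] at hd
      have hd' : (2 * J / sphereArea (m + 1)) ^ 2 = 1 := by exact_mod_cast hd
      have : 2 * J / sphereArea (m + 1) = 1 :=
        (pow_eq_one_iff_of_nonneg (by positivity) two_ne_zero).mp hd'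
      rw [hdr, this]; simp
    rw [hP, hc, hd1, mul_one]
    rw [show (QF Asym⁻¹ (toUp (n := m + 1) x' 1).ofLp) ^ (-((m + 1 : ℕ) : ℂ) / 2) = _ from key x']
    push_cast; rfl

end
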